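/- Let G be a word hyperbolic group generated by a finite set 𝒢 closed under inversion, and let C₁ and C₂ be virtually cyclic subgroups of G whose intersection C₁ ∩ C₂ is finite. Then there is a constant λ₂ > 0 such that for any c₁ ∈ C₁ and c₂ ∈ C₂, the word V₁V₂ is λ₂-quasigeodesic in the word metric d_𝒢, where Vᵢ is any d_𝒢-geodesic word representing cᵢ for i = 1, 2. -/

import Mathlib

universe u v w

section Defs

variable {G : Type u} [Group G]

/-- A finite generating set closed under inversion. -/
def IsSymmGen (X : Set G) : Prop :=
  X.Finite ∧ (∀ x ∈ X, x⁻¹ ∈ X) ∧ Subgroup.closure X = ⊤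

/-- Word length of `g` with respect to `X`. -/
noncomputable def wordLength (X : Set G) (g : G) : ℕ :=
  sInf {n : ℕ | ∃ l : List G, l.length = n ∧ (∀ x ∈ l, x ∈ X) ∧ l.prod = g}

/-- Word metric. -/
noncomputable def wordDist (X : Set G) (g h : G) : ℕ :=
  wordLength X (g⁻¹ * h)

/-- Gromov product with respect to the word metric. -/
noncomputable def gromovProd (X : Set G) (x y w : G) : ℝ :=
  ((wordDist X x w : ℝ) + (wordDist X y w : ℝ) - (wordDist X x y : ℝ)) / 2

end Defs

/-- A group is word hyperbolic if for some finite symmetric generating set the Gromov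
product satisfies the hyperbolicity inequality. -/
def IsWordHyperbolic (G : Type u) [Group G] : Prop :=
  ∃ X : Set G, IsSymmGen X ∧ ∃ δ : ℝ, 0 ≤ δ ∧
    ∀ x y z w : G,
      gromovProd X x z w ≥ min (gromovProd X x y w) (gromovProd X y z w) - δ

/-- A subgroup is quasiconvex: it is finitely generated and word lengths distort linearly. -/
def IsQuasiconvex {G : Type u} [Group G] (A : Subgroup G) : Prop :=
  ∃ Y : Set ↥A, IsSymmGen Y ∧ ∃ X : Set G, IsSymmGen X ∧ ∃ c : ℝ, 0 < c ∧
    ∀ a : ↥A, (wordLength Y a : ℝ) ≤ c * (wordLength X (a : G) : ℝ) + c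

/-- Property (Q): every finitely generated subgroup is quasiconvex. -/
def HasPropertyQ (G : Type u) [Group G] : Prop :=
  ∀ H : Subgroup G, H.FG → IsQuasiconvex H

/-- A group is virtually cyclic if it has a cyclic subgroup of finite index. -/
def IsVirtuallyCyclic (C : Type u) [Group C] : Prop :=
  ∃ Z : Subgroup C, IsCyclic ↥Z ∧ Z.FiniteIndex

/-- `G` is the amalgamated free product of its subgroups `A` and `B` along `C`:
`C = A ⊓ B`, `A ⊔ B = ⊤` and `G` has the pushout universal property. -/
structure IsAmalgamatedFreeProduct {G : Type u} [Group G] (A B C : Subgroup G) : Prop where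
  le_left : C ≤ A
  le_right : C ≤ B
  inf_eq : A ⊓ B = C
  sup_eq_top : A ⊔ B = ⊤
  univ : ∀ (K : Type u) [Group K] (f : ↥A →* K) (g : ↥B →* K),
    (∀ (c : G) (hA : c ∈ A) (hB : c ∈ B), f ⟨c, hA⟩ = g ⟨c, hB⟩) →
    ∃ h : G →* K, (∀ a : ↥A, h a = f a) ∧ (∀ b : ↥B, h b = g b)

section Words

variable {G : Type u} [Group G]

/-- A word over the alphabet `X`. -/
def IsWordOver (X : Set G) (l : List G) : Prop := ∀ x ∈ l, x ∈ X

/-- A geodesic word over `X`. -/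
def IsGeodesicWord (X : Set G) (l : List G) : Prop :=
  IsWordOver X l ∧ l.length = wordLength X l.prod

/-- A `lam`-quasigeodesic word over `X`: every subword `v` satisfies
`l(v) ≤ lam * l_X(v̄) + lam`. -/
def IsQuasigeodesicWord (X : Set G) (lam : ℝ) (l : List G) : Prop :=
  IsWordOver X l ∧
    ∀ v : List G, v <:+: l → (v.length : ℝ) ≤ lam * (wordLength X v.prod : ℝ) + lam

/-- `g` is a shortest element of the subset `S` with respect to `wordLength X`. -/
def ShortestIn (X : Set G) (g : G) (S : Set G) : Prop :=
  g ∈ S ∧ ∀ s ∈ S, wordLength X g ≤ wordLength X s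

end Words

/-- `G` together with `ια, ιβ` is the pushout of `ℤ → A, 1 ↦ x` and `ℤ → B, 1 ↦ y`. -/
structure IsAmalgamOverZ {A : Type u} {B : Type v} {G : Type w}
    [Group A] [Group B] [Group G]
    (ια : A →* G) (ιβ : B →* G) (x : A) (y : B) : Prop where
  comm : ια x = ιβ y
  gen : ια.range ⊔ ιβ.range = ⊤
  univ : ∀ (K : Type (max u v w)) [Group K] (f : A →* K) (g : B →* K),
    f x = g y → ∃ h : G →* K, h.comp ια = f ∧ h.comp ιβ = g


section WordMetric

variable {G : Type u} {X : Set G}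

theorem IsWordOver.of_append_left {l₁ l₂ : List G} (h : IsWordOver X (l₁ ++ l₂)) :
    IsWordOver X l₁ := fun x hx => h x (List.mem_append_left _ hx)

theorem IsWordOver.of_append_right {l₁ l₂ : List G} (h : IsWordOver X (l₁ ++ l₂)) :
    IsWordOver X l₂ := fun x hx => h x (List.mem_append_right _ hx)

theorem IsWordOver.append {l₁ l₂ : List G} (h₁ : IsWordOver X l₁) (h₂ : IsWordOver X l₂) :
    IsWordOver X (l₁ ++ l₂) := fun x hx => (List.mem_append.1 hx).elim (h₁ x) (h₂ x)

variable [Group G]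

theorem exists_isGeodesicWord (hX : IsSymmGen X) (g : G) :
    ∃ l : List G, IsGeodesicWord X l ∧ l.prod = g := by
  have hne : {n : ℕ | ∃ l : List G, l.length = n ∧ (∀ x ∈ l, x ∈ X) ∧ l.prod = g}.Nonempty := by
    have hg : g ∈ (Subgroup.closure X).toSubmonoid := by rw [hX.2.2]; trivial
    rw [Subgroup.closure_toSubmonoid] at hg
    obtain ⟨l, hl, hp⟩ := Submonoid.exists_list_of_mem_closure hg
    refine ⟨l.length, l, rfl, fun x hx => ?_, hp⟩
    rcases hl x hx with h | h
    · exact h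
    · simpa using hX.2.1 _ (Set.mem_inv.1 h)
  obtain ⟨l, hlen, hl, hp⟩ := Nat.sInf_mem hne
  exact ⟨l, ⟨hl, by rw [hp]; exact hlen⟩, hp⟩

theorem wordLength_prod_le {l : List G} (hl : IsWordOver X l) :
    wordLength X l.prod ≤ l.length :=
  Nat.sInf_le ⟨l, rfl, hl, rfl⟩

theorem wordLength_one : wordLength X (1 : G) = 0 := by
  simpa using wordLength_prod_le (X := X) (l := []) (by intro x hx; simp at hx)

theorem wordLength_mul_le (hX : IsSymmGen X) (g h : G) :
    wordLength X (g * h) ≤ wordLength X g + wordLength X h := by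
  obtain ⟨l₁, ⟨hl₁, hn₁⟩, rfl⟩ := exists_isGeodesicWord hX g
  obtain ⟨l₂, ⟨hl₂, hn₂⟩, rfl⟩ := exists_isGeodesicWord hX h
  have := wordLength_prod_le (hl₁.append hl₂)
  simp only [List.prod_append, List.length_append] at this
  omega

theorem wordLength_inv_le (hX : IsSymmGen X) (g : G) :
    wordLength X g⁻¹ ≤ wordLength X g := by
  obtain ⟨l, ⟨hl, hn⟩, rfl⟩ := exists_isGeodesicWord hX g
  rw [← hn, List.prod_inv_reverse]
  refine (wordLength_prod_le ?_).trans (by simp)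
  intro x hx
  simp only [List.mem_reverse, List.mem_map] at hx
  obtain ⟨y, hy, rfl⟩ := hx
  exact hX.2.1 _ (hl y hy)

theorem wordLength_inv (hX : IsSymmGen X) (g : G) : wordLength X g⁻¹ = wordLength X g :=
  le_antisymm (wordLength_inv_le hX g) (by simpa using wordLength_inv_le hX g⁻¹)

theorem wordLength_pow_le (hX : IsSymmGen X) (g : G) (n : ℕ) :
    wordLength X (g ^ n) ≤ n * wordLength X g := by
  induction n with
  | zero => simp [wordLength_one]
  | succ n ih =>
    have := wordLength_mul_le hX (g ^ n) g
    rw [pow_succ, Nat.succ_mul]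
    omega

theorem wordDist_self (x : G) : wordDist X x x = 0 := by simp [wordDist, wordLength_one]

theorem wordDist_comm (hX : IsSymmGen X) (x y : G) : wordDist X x y = wordDist X y x := by
  rw [wordDist, ← wordLength_inv hX]; simp [wordDist]

theorem wordDist_triangle (hX : IsSymmGen X) (x y z : G) :
    wordDist X x z ≤ wordDist X x y + wordDist X y z := by
  have := wordLength_mul_le hX (x⁻¹ * y) (y⁻¹ * z)
  simpa [wordDist, mul_assoc] using this

theorem wordDist_mul_left (g x y : G) : wordDist X (g * x) (g * y) = wordDist X x y := by
  simp [wordDist, mul_assoc]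

theorem wordDist_one_left (x : G) : wordDist X 1 x = wordLength X x := by simp [wordDist]

/-- Balls of a word metric are finite. -/
theorem finite_wordLength_le (hX : IsSymmGen X) (n : ℕ) :
    {g : G | wordLength X g ≤ n}.Finite := by
  have : Finite X := hX.1
  refine ((List.finite_length_le X n).image fun l => (l.map Subtype.val).prod).subset ?_
  intro g hg
  obtain ⟨l, ⟨hl, hn⟩, rfl⟩ := exists_isGeodesicWord hX g
  refine ⟨l.attachWith (· ∈ X) hl, ?_, congrArg List.prod (List.attachWith_map_subtype_val hl)⟩
  exact (List.length_attachWith.trans hn).trans_le hg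

/-- Two word lengths on the same group are bilipschitz equivalent. -/
theorem exists_wordLength_le_mul {Y : Set G} (hX : IsSymmGen X) (hY : IsSymmGen Y) :
    ∃ A : ℕ, ∀ g : G, wordLength X g ≤ A * wordLength Y g := by
  obtain ⟨A, hA⟩ := (hY.1.image (wordLength X)).bddAbove
  refine ⟨A, fun g => ?_⟩
  obtain ⟨l, ⟨hl, hn⟩, rfl⟩ := exists_isGeodesicWord hY g
  rw [← hn]
  clear hn
  induction l with
  | nil => simp [wordLength_one]
  | cons a l ih =>
    have h₁ := wordLength_mul_le hX a l.prod
    have h₂ := ih fun x hx => hl x (List.mem_cons_of_mem _ hx)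
    have h₃ : wordLength X a ≤ A := hA ⟨a, hl a List.mem_cons_self, rfl⟩
    rw [List.prod_cons, List.length_cons, Nat.mul_succ]
    omega

theorem IsGeodesicWord.of_append_left (hX : IsSymmGen X) {l₁ l₂ : List G}
    (h : IsGeodesicWord X (l₁ ++ l₂)) : IsGeodesicWord X l₁ := by
  have h₁ := wordLength_prod_le h.1.of_append_left
  have h₂ := wordLength_prod_le h.1.of_append_right
  have h₃ := wordLength_mul_le hX l₁.prod l₂.prod
  have h₄ := h.2
  simp only [List.prod_append, List.length_append] at h₄
  exact ⟨h.1.of_append_left, by omega⟩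

theorem IsGeodesicWord.of_append_right (hX : IsSymmGen X) {l₁ l₂ : List G}
    (h : IsGeodesicWord X (l₁ ++ l₂)) : IsGeodesicWord X l₂ := by
  have h₁ := wordLength_prod_le h.1.of_append_left
  have h₂ := wordLength_prod_le h.1.of_append_right
  have h₃ := wordLength_mul_le hX l₁.prod l₂.prod
  have h₄ := h.2
  simp only [List.prod_append, List.length_append] at h₄
  exact ⟨h.1.of_append_right, by omega⟩

theorem IsGeodesicWord.of_isInfix (hX : IsSymmGen X) {l v : List G} (h : IsGeodesicWord X l)
    (hv : v <:+: l) : IsGeodesicWord X v := by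
  obtain ⟨s, t, rfl⟩ := hv
  exact (h.of_append_left hX).of_append_right hX

/-- The vertices visited by a geodesic word form a geodesic. -/
theorem IsGeodesicWord.wordDist_take (hX : IsSymmGen X) {l : List G} (h : IsGeodesicWord X l)
    {i j : ℕ} (hij : i ≤ j) (hj : j ≤ l.length) :
    wordDist X (l.take i).prod (l.take j).prod = j - i := by
  have hsplit : l.take j = l.take i ++ (l.take j).drop i := by
    conv_lhs => rw [← List.take_append_drop i (l.take j)]
    rw [List.take_take, min_eq_left hij]
  have hg : IsGeodesicWord X ((l.take j).drop i) :=
    h.of_isInfix hX ((List.drop_suffix _ _).isInfix.trans (List.take_prefix _ _).isInfix)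
  rw [hsplit, List.prod_append, wordDist, inv_mul_cancel_left, ← hg.2]
  simp [hj]

/-- `y` restricted to `{0, …, n}` is a geodesic. -/
def IsGeodesicPath (X : Set G) (y : ℕ → G) (n : ℕ) : Prop :=
  ∀ i j, i ≤ j → j ≤ n → wordDist X (y i) (y j) = j - i

theorem exists_isGeodesicPath (hX : IsSymmGen X) (g h : G) :
    ∃ y : ℕ → G, y 0 = g ∧ y (wordDist X g h) = h ∧ IsGeodesicPath X y (wordDist X g h) := by
  obtain ⟨l, hl, hp⟩ := exists_isGeodesicWord hX (g⁻¹ * h)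
  have hlen : l.length = wordDist X g h := by rw [hl.2, hp]; rfl
  refine ⟨fun i => g * (l.take i).prod, by simp, ?_, fun i j hij hj => ?_⟩
  · simp [← hlen, hp]
  · rw [wordDist_mul_left]
    exact hl.wordDist_take hX hij (hlen ▸ hj)

/-- The four-point formulation of hyperbolicity. -/
def FourPoint (X : Set G) (E : ℕ) : Prop :=
  ∀ x y z w : G, wordDist X x z + wordDist X y w ≤ wordDist X x y + wordDist X z w + E ∨
    wordDist X x z + wordDist X y w ≤ wordDist X y z + wordDist X x w + E

theorem IsWordHyperbolic.exists_fourPoint (hG : IsWordHyperbolic G) :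
    ∃ X : Set G, IsSymmGen X ∧ ∃ E : ℕ, FourPoint X E := by
  obtain ⟨X, hX, δ, -, h⟩ := hG
  refine ⟨X, hX, ⌈2 * δ⌉₊, fun x y z w => ?_⟩
  have hE := Nat.le_ceil (2 * δ)
  have := h x y z w
  simp only [gromovProd] at this
  rcases min_choice (((wordDist X x w : ℝ) + wordDist X y w - wordDist X x y) / 2)
    (((wordDist X y w : ℝ) + wordDist X z w - wordDist X y z) / 2) with hm | hm <;>
    rw [hm] at this
  · left
    have : (wordDist X x z : ℝ) + wordDist X y w ≤
      wordDist X x y + wordDist X z w + (⌈2 * δ⌉₊ : ℕ) := by linarith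
    exact_mod_cast this
  · right
    have : (wordDist X x z : ℝ) + wordDist X y w ≤
      wordDist X y z + wordDist X x w + (⌈2 * δ⌉₊ : ℕ) := by linarith
    exact_mod_cast this

end WordMetric

/-- Exponentials eventually dominate quadratic polynomials. -/
theorem exists_forall_mul_sq_lt_two_pow (C : ℕ) :
    ∃ k₀ : ℕ, ∀ k, k₀ ≤ k → C * (k + 1) ^ 2 < 2 ^ k := by
  have h := tendsto_pow_const_div_const_pow_of_one_lt 2 (show (1 : ℝ) < 2 by norm_num)
  have h' := h.eventually (gt_mem_nhds (show (0 : ℝ) < 1 / (2 * C + 2) by positivity))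
  obtain ⟨k₀, hk₀⟩ := Filter.eventually_atTop.1 h'
  refine ⟨k₀, fun k hk => ?_⟩
  have hk := hk₀ (k + 1) (by omega)
  rw [div_lt_div_iff₀ (by positivity) (by positivity)] at hk
  have : (C : ℝ) * (k + 1) ^ 2 < 2 ^ k := by
    push_cast at hk
    rw [pow_succ (2 : ℝ) k] at hk
    nlinarith [sq_nonneg ((k : ℝ) + 1)]
  exact_mod_cast this

section Morse

variable {G : Type u} [Group G] {X : Set G} {E : ℕ}

/-- A path of `N ≤ 2 ^ k` steps, all of whose steps are far from `w`, has endpoints with large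
Gromov product with respect to `w`. -/
theorem FourPoint.le_gromovProd_of_path (hE : FourPoint X E) {x : ℕ → G}
    {w : G} {P c k N i : ℕ} (hN : N ≤ 2 ^ k)
    (hpt : ∀ t, i ≤ t → t ≤ i + N → P ≤ 2 * wordDist X (x t) w + c)
    (hstep : ∀ t, i ≤ t → t < i + N →
      P + wordDist X (x t) (x (t + 1)) ≤ wordDist X (x t) w + wordDist X (x (t + 1)) w + c) :
    P + wordDist X (x i) (x (i + N)) ≤
      wordDist X (x i) w + wordDist X (x (i + N)) w + c + k * E := by
  induction k generalizing i N with
  | zero =>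
    have : N = 0 ∨ N = 1 := by omega
    rcases this with rfl | rfl
    · have := hpt i le_rfl (by omega)
      simp only [add_zero, wordDist_self]
      omega
    · have := hstep i le_rfl (by omega)
      omega
  | succ k ih =>
    obtain ⟨N₁, N₂, rfl, h₁, h₂⟩ : ∃ N₁ N₂, N = N₁ + N₂ ∧ N₁ ≤ 2 ^ k ∧ N₂ ≤ 2 ^ k := by
      refine ⟨min N (2 ^ k), N - min N (2 ^ k), by omega, by omega, ?_⟩
      rw [pow_succ] at hN
      omega
    have hl := ih (i := i) h₁ (fun t ht ht' => hpt t ht (by omega))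
      (fun t ht ht' => hstep t ht (by omega))
    have hr := ih (i := i + N₁) h₂ (fun t ht ht' => hpt t (by omega) (by omega))
      (fun t ht ht' => hstep t (by omega) (by omega))
    have h4 := hE (x i) (x (i + N₁)) (x (i + (N₁ + N₂))) w
    rw [Nat.succ_mul]
    rw [add_assoc i] at hr
    omega

/-- `x` restricted to `{0, …, n}` is bilipschitz with constant `A`. -/
def IsBilipschitzPath (X : Set G) (A : ℕ) (x : ℕ → G) (n : ℕ) : Prop :=
  ∀ i j, i ≤ j → j ≤ n →
    wordDist X (x i) (x j) ≤ A * (j - i) ∧ j - i ≤ A * wordDist X (x i) (x j)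

theorem exists_forall_le_of_le_clog (A E : ℕ) :
    ∃ D₀ : ℕ, ∀ D, 2 * D ≤ A + (Nat.clog 2 (6 * A * D) + 2) * E → D ≤ D₀ := by
  obtain ⟨k₀, hk₀⟩ := exists_forall_mul_sq_lt_two_pow (6 * A * (A + 3 * E))
  refine ⟨A + (k₀ + 2) * E, fun D hD => ?_⟩
  have hk : Nat.clog 2 (6 * A * D) ≤ k₀ := by
    by_contra! hlt
    obtain ⟨k, hk⟩ : ∃ k, Nat.clog 2 (6 * A * D) = k + 1 :=
      ⟨_, (Nat.sub_add_cancel (by omega)).symm⟩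
    have h₁ := hk₀ k (by omega)
    have h₂ : 2 ^ k < 6 * A * D := by
      rw [← Nat.lt_clog_iff_pow_lt (by norm_num)]
      omega
    rw [hk] at hD
    have h₃ : D ≤ (A + 3 * E) * (k + 1) ^ 2 := by
      nlinarith [Nat.zero_le (A * k), Nat.zero_le (E * k), Nat.zero_le (A * k ^ 2),
        Nat.zero_le (E * k ^ 2)]
    have h₄ := Nat.mul_le_mul_left (6 * A) h₃
    nlinarith
  have := Nat.mul_le_mul_right E (Nat.add_le_add_right hk 2)
  omega

/-- Geodesics stay close to bilipschitz paths with the same endpoints. -/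
theorem FourPoint.exists_geodesic_near_path (hX : IsSymmGen X) (hE : FourPoint X E) (A : ℕ) :
    ∃ D : ℕ, ∀ (x y : ℕ → G) (n m : ℕ), IsBilipschitzPath X A x n → IsGeodesicPath X y m →
      y 0 = x 0 → y m = x n → ∀ j ≤ m, ∃ i ≤ n, wordDist X (y j) (x i) ≤ D := by
  obtain ⟨D₀, hD₀⟩ := exists_forall_le_of_le_clog A E
  refine ⟨D₀, fun x y n m hx hy h0 hm => ?_⟩
  have hmin : ∀ j, ∃ i ≤ n, ∀ i' ≤ n, wordDist X (y j) (x i) ≤ wordDist X (y j) (x i') := by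
    intro j
    obtain ⟨i, hi, h⟩ := Finset.exists_min_image (Finset.range (n + 1))
      (fun i => wordDist X (y j) (x i)) ⟨0, by simp⟩
    simp only [Finset.mem_range] at hi h
    exact ⟨i, by omega, fun i' hi' => h i' (by omega)⟩
  choose p hpn hp using hmin
  obtain ⟨s, hs, hmax⟩ := Finset.exists_max_image (Finset.range (m + 1))
    (fun j => wordDist X (y j) (x (p j))) ⟨0, by simp⟩
  simp only [Finset.mem_range] at hs hmax
  set D := wordDist X (y s) (x (p s)) with hD
  suffices D ≤ D₀ from fun j hj => ⟨p j, hpn j, (hmax j (by omega)).trans this⟩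
  apply hD₀
  set w := y s
  have hw : ∀ t ≤ n, D ≤ wordDist X (x t) w := fun t ht => by
    rw [wordDist_comm hX]; exact hp s t ht
  -- the two endpoints of the window around `w`
  obtain ⟨a, has, has', ha⟩ : ∃ a ≤ s, s - a ≤ 2 * D ∧
      2 * D + wordDist X (y a) (x (p a)) ≤ wordDist X (y a) w + wordDist X (x (p a)) w := by
    rcases le_or_gt (2 * D) s with h | h
    · refine ⟨s - 2 * D, by omega, by omega, ?_⟩
      have h₁ : wordDist X (y (s - 2 * D)) w = s - (s - 2 * D) :=
        hy (s - 2 * D) s (by omega) (by omega)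
      have h₂ := hmax (s - 2 * D) (by omega)
      have h₃ := hw _ (hpn (s - 2 * D))
      omega
    · refine ⟨0, by omega, by omega, ?_⟩
      have h₁ := hp 0 0 (by omega)
      rw [h0, wordDist_self] at h₁
      have h₂ := wordDist_triangle hX (x (p 0)) (y 0) w
      have h₃ := wordDist_comm hX (x (p 0)) (y 0)
      have h₄ := hw 0 (by omega)
      have h₅ := hw _ (hpn 0)
      rw [h0] at *
      omega
  obtain ⟨b, hsb, hbm, hsb', hb⟩ : ∃ b, s ≤ b ∧ b ≤ m ∧ b - s ≤ 2 * D ∧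
      2 * D + wordDist X (y b) (x (p b)) ≤ wordDist X (y b) w + wordDist X (x (p b)) w := by
    rcases le_or_gt (s + 2 * D) m with h | h
    · refine ⟨s + 2 * D, by omega, by omega, by omega, ?_⟩
      have h₁ : wordDist X w (y (s + 2 * D)) = s + 2 * D - s :=
        hy s (s + 2 * D) (by omega) (by omega)
      rw [wordDist_comm hX] at h₁
      have h₂ := hmax (s + 2 * D) (by omega)
      have h₃ := hw _ (hpn (s + 2 * D))
      omega
    · refine ⟨m, by omega, le_rfl, by omega, ?_⟩
      have h₁ := hp m n le_rfl
      rw [hm, wordDist_self] at h₁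
      have h₄ := hw n le_rfl
      have h₅ := hw _ (hpn m)
      rw [hm] at *
      omega
  have hab : wordDist X (y a) (y b) = wordDist X (y a) w + wordDist X (y b) w := by
    rw [wordDist_comm hX (y b), hy a b (by omega) hbm, hy a s has (by omega), hy s b hsb hbm]
    omega
  have hsub := hy a b (by omega) hbm
  have hDa := hmax a (by omega)
  have hDb := hmax b (by omega)
  have hend : wordDist X (x (p a)) (x (p b)) ≤ 6 * D := by
    have h₁ := wordDist_triangle hX (x (p a)) (y a) (x (p b))
    have h₂ := wordDist_triangle hX (y a) (y b) (x (p b))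
    have h₃ := wordDist_comm hX (x (p a)) (y a)
    omega
  have hmid : ∀ i j, i ≤ j → j ≤ n → wordDist X (x i) (x j) ≤ 6 * D →
      2 * D + wordDist X (x i) (x j) ≤ wordDist X (x i) w + wordDist X (x j) w + A +
        Nat.clog 2 (6 * A * D) * E := by
    intro i j hij hj hd
    obtain ⟨N, rfl⟩ := Nat.exists_eq_add_of_le hij
    refine hE.le_gromovProd_of_path ?_ (fun t _ ht => ?_) (fun t _ ht => ?_)
    · refine le_trans ?_ (Nat.le_pow_clog (by norm_num) _)
      have h₁ := (hx i (i + N) hij hj).2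
      have h₂ := Nat.mul_le_mul_left A hd
      rw [Nat.add_sub_cancel_left] at h₁
      linarith
    · have := hw t (by omega)
      omega
    · have h₁ := hw t (by omega)
      have h₂ := hw (t + 1) (by omega)
      have h₃ := (hx t (t + 1) (by omega) (by omega)).1
      simp only [Nat.add_sub_cancel_left, mul_one] at h₃
      omega
  have hpq : 2 * D + wordDist X (x (p a)) (x (p b)) ≤
      wordDist X (x (p a)) w + wordDist X (x (p b)) w + A + Nat.clog 2 (6 * A * D) * E := by
    rcases le_total (p a) (p b) with h | h
    · exact hmid _ _ h (hpn b) hend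
    · have hc := wordDist_comm hX (x (p a)) (x (p b))
      have := hmid _ _ h (hpn a) (by omega)
      omega
  have h4 := hE (y a) (x (p a)) (x (p b)) w
  have h4' := hE (y a) (x (p b)) (y b) w
  have hc := wordDist_comm hX (y b) (x (p b))
  rw [Nat.add_mul]
  omega

/-- Bilipschitz paths stay close to geodesics, in Gromov product form. -/
theorem FourPoint.exists_path_near_geodesic (hX : IsSymmGen X) (hE : FourPoint X E) (A : ℕ) :
    ∃ M : ℕ, ∀ (x : ℕ → G) (n k : ℕ), IsBilipschitzPath X A x n → k ≤ n →
      wordDist X (x 0) (x k) + wordDist X (x k) (x n) ≤ wordDist X (x 0) (x n) + M := by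
  obtain ⟨D, hD⟩ := hE.exists_geodesic_near_path hX A
  refine ⟨2 * (A * (A * (2 * D + 1)) + D), fun x n k hx hk => ?_⟩
  obtain ⟨y, h0, hm, hy⟩ := exists_isGeodesicPath hX (x 0) (x n)
  set m := wordDist X (x 0) (x n) with hmdef
  have hnear := hD x y n m hx hy h0 hm
  -- a vertex of the geodesic close to the path both before and after `k`
  obtain ⟨j, hj, i, i', hik, hki, hin, hi, hi'⟩ : ∃ j ≤ m, ∃ i i', i ≤ k ∧ k ≤ i' ∧ i' ≤ n ∧
      wordDist X (y j) (x i) ≤ D ∧ wordDist X (y j) (x i') ≤ D + 1 := by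
    classical
    let Q : ℕ → Prop := fun j => j ≤ m ∧ ∃ i', k ≤ i' ∧ i' ≤ n ∧ wordDist X (y j) (x i') ≤ D
    have hQ : ∃ j, Q j := ⟨m, le_rfl, n, hk, le_rfl, by rw [hm, wordDist_self]; omega⟩
    obtain ⟨hfm, i', hki, hin, hi'⟩ := Nat.find_spec hQ
    rcases Nat.eq_zero_or_pos (Nat.find hQ) with hz | hpos
    · refine ⟨0, by omega, 0, i', by omega, hki, hin, by rw [h0, wordDist_self]; omega, ?_⟩
      rw [hz] at hi'
      omega
    · obtain ⟨i, hin', hi⟩ := hnear (Nat.find hQ - 1) (by omega)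
      have hnot := Nat.find_min hQ (m := Nat.find hQ - 1) (by omega)
      have hik : i ≤ k := by
        by_contra! hlt
        exact hnot ⟨by omega, i, hlt.le, hin', hi⟩
      refine ⟨Nat.find hQ - 1, by omega, i, i', hik, hki, hin, hi, ?_⟩
      have h₁ := hy (Nat.find hQ - 1) (Nat.find hQ) (by omega) hfm
      have h₂ := wordDist_triangle hX (y (Nat.find hQ - 1)) (y (Nat.find hQ)) (x i')
      omega
  have hii : wordDist X (x i) (x i') ≤ 2 * D + 1 := by
    have h₁ := wordDist_triangle hX (x i) (y j) (x i')
    have h₂ := wordDist_comm hX (x i) (y j)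
    omega
  have hxk : wordDist X (x i) (x k) ≤ A * (A * (2 * D + 1)) := by
    have h₁ := (hx i k hik hk).1
    have h₂ := (hx i i' (hik.trans hki) hin).2
    have h₃ : k - i ≤ A * (2 * D + 1) := by
      have := Nat.mul_le_mul_left A hii
      omega
    exact h₁.trans (Nat.mul_le_mul_left A h₃)
  have hyk : wordDist X (y j) (x k) ≤ A * (A * (2 * D + 1)) + D := by
    have := wordDist_triangle hX (y j) (x i) (x k)
    omega
  have h₁ := hy 0 j (by omega) hj
  have h₂ := hy j m hj le_rfl
  rw [h0] at h₁
  rw [hm] at h₂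
  have h₃ := wordDist_triangle hX (x 0) (y j) (x k)
  have h₄ := wordDist_triangle hX (x k) (y j) (x n)
  have h₅ := wordDist_comm hX (x k) (y j)
  omega

/-- A geodesic word for one generating set is coarsely length-additive for any hyperbolic word
metric on the same group. -/
theorem FourPoint.exists_wordLength_add_le_of_isGeodesicWord (hX : IsSymmGen X)
    (hE : FourPoint X E) {Y : Set G} (hY : IsSymmGen Y) :
    ∃ M : ℕ, ∀ r s : List G, IsGeodesicWord Y (r ++ s) →
      wordLength X r.prod + wordLength X s.prod ≤ wordLength X (r ++ s).prod + M := by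
  obtain ⟨A₁, hA₁⟩ := exists_wordLength_le_mul hX hY
  obtain ⟨A₂, hA₂⟩ := exists_wordLength_le_mul hY hX
  obtain ⟨M, hM⟩ := hE.exists_path_near_geodesic hX (max A₁ A₂)
  refine ⟨M, fun r s h => ?_⟩
  have hx : IsBilipschitzPath X (max A₁ A₂) (fun i => ((r ++ s).take i).prod)
      (r ++ s).length := by
    intro i j hij hj
    have hd := h.wordDist_take hY hij hj
    have h₁ := hA₁ (((r ++ s).take i).prod⁻¹ * ((r ++ s).take j).prod)
    have h₂ := hA₂ (((r ++ s).take i).prod⁻¹ * ((r ++ s).take j).prod)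
    rw [← wordDist, ← wordDist, hd] at h₁ h₂
    exact ⟨h₁.trans (Nat.mul_le_mul_right _ (le_max_left _ _)),
      h₂.trans (Nat.mul_le_mul_right _ (le_max_right _ _))⟩
  have := hM _ _ r.length hx (by simp)
  simp only [List.take_length, List.take_zero, List.take_left, List.prod_nil] at this
  rw [wordDist_one_left, wordDist_one_left, wordDist, List.prod_append,
    inv_mul_cancel_left] at this
  rwa [List.prod_append]

end Morse

section Loxodromic

variable {G : Type u} [Group G] {X : Set G} {E : ℕ}

theorem wordDist_pow_add (g : G) (i j : ℕ) :
    wordDist X (g ^ i) (g ^ (i + j)) = wordLength X (g ^ j) := by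
  rw [wordDist, pow_add, inv_mul_cancel_left]

/-- In a hyperbolic group the powers of an element of infinite order escape linearly. -/
theorem FourPoint.exists_le_mul_of_injective_pow (hX : IsSymmGen X) (hE : FourPoint X E) {g : G}
    (hg : Function.Injective fun n : ℕ => g ^ n) :
    ∃ B : ℕ, ∀ L R, (∀ i ≤ L, wordLength X (g ^ i) ≤ R) → L + 1 ≤ (2 * R + 1) * B := by
  refine ⟨(finite_wordLength_le hX (3 * E)).toFinset.card, fun L R hR => ?_⟩
  obtain ⟨N, hN⟩ : ∃ N, 2 * R + 2 * E + 4 ≤ wordLength X (g ^ N) := by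
    by_contra! hlt
    refine Set.infinite_range_of_injective hg
      ((finite_wordLength_le hX (2 * R + 2 * E + 4)).subset ?_)
    rintro _ ⟨n, rfl⟩
    exact (hlt n).le
  obtain ⟨y, h0, hT, hy⟩ := exists_isGeodesicPath hX 1 (g ^ N)
  have hTN : wordDist X 1 (g ^ N) = wordLength X (g ^ N) := wordDist_one_left _
  set T := wordDist X 1 (g ^ N) with hTdef
  -- translates of the midpoint stay close to the geodesic
  obtain ⟨t, ht⟩ : ∃ t, t = T / 2 := ⟨_, rfl⟩
  have key : ∀ i ≤ L, t ≤ wordDist X 1 (g ^ i * y t) + R ∧ wordDist X 1 (g ^ i * y t) ≤ t + R ∧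
      wordDist X (y (wordDist X 1 (g ^ i * y t))) (g ^ i * y t) ≤ 3 * E := by
    intro i hi
    set p := g ^ i * y t with hp
    have hi := hR i hi
    rw [← wordDist_one_left] at hi
    have h₁ : wordDist X (g ^ i) p = t := by
      have := wordDist_mul_left (X := X) (g ^ i) 1 (y t)
      rw [mul_one] at this
      rw [this, ← h0, hy 0 t (by omega) (by omega)]
      omega
    have h₂ : wordDist X p (g ^ i * g ^ N) = T - t := by
      rw [hp, wordDist_mul_left, ← hy t T (by omega) le_rfl, hT]
    have h₃ : wordDist X (g ^ N) (g ^ i * g ^ N) = wordDist X 1 (g ^ i) := by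
      rw [← pow_add, add_comm, wordDist_pow_add, wordDist_one_left]
    have h₄ : wordDist X (g ^ i) (g ^ i * g ^ N) = T := by
      rw [← pow_add, wordDist_pow_add, hTN]
    have h₂' := wordDist_comm hX p (g ^ i * g ^ N)
    have hpN := wordDist_comm hX p (g ^ N)
    have h₁' := wordDist_comm hX 1 (g ^ i)
    have q₁ := hE (g ^ i) 1 (g ^ i * g ^ N) p
    have q₂ := hE 1 (g ^ N) (g ^ i * g ^ N) p
    have t₁ := wordDist_triangle hX 1 (g ^ i) p
    have t₂ := wordDist_triangle hX (g ^ i) 1 p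
    have t₃ := wordDist_triangle hX (g ^ i * g ^ N) (g ^ N) p
    have h₃' := wordDist_comm hX (g ^ N) (g ^ i * g ^ N)
    have hadd : wordDist X 1 p + wordDist X p (g ^ N) ≤ T + 2 * E := by omega
    refine ⟨by omega, by omega, ?_⟩
    obtain ⟨s, hs⟩ : ∃ s, s = wordDist X 1 p := ⟨_, rfl⟩
    rw [← hs]
    have hsT : s ≤ T := by omega
    have h₅ := hy 0 s (by omega) hsT
    have h₆ := hy s T hsT le_rfl
    rw [h0] at h₅
    rw [hT] at h₆
    have q₃ := hE (y s) (g ^ N) p 1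
    have c₁ := wordDist_comm hX (y s) 1
    have c₂ := wordDist_comm hX (g ^ N) 1
    have c₃ := wordDist_comm hX p 1
    omega
  have hcard : (Finset.range (L + 1)).card ≤
      (Finset.Icc (t - R) (t + R) ×ˢ (finite_wordLength_le hX (3 * E)).toFinset).card := by
    refine Finset.card_le_card_of_injOn (fun i => (wordDist X 1 (g ^ i * y t),
      (y (wordDist X 1 (g ^ i * y t)))⁻¹ * (g ^ i * y t))) (fun i hi => ?_) (fun i _ j _ hij => ?_)
    · simp only [Finset.coe_range, Set.mem_Iio] at hi
      obtain ⟨k₁, k₂, k₃⟩ := key i (by omega)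
      simp only [Finset.coe_product, Set.mem_prod, Finset.mem_coe, Finset.mem_Icc,
        Set.Finite.mem_toFinset, Set.mem_ofPred_eq]
      exact ⟨by omega, k₃⟩
    · simp only [Prod.mk.injEq] at hij
      obtain ⟨e₁, e₂⟩ := hij
      rw [e₁] at e₂
      exact hg (mul_right_cancel (mul_left_cancel e₂))
  rw [Finset.card_range, Finset.card_product, Nat.card_Icc] at hcard
  have : t + R + 1 - (t - R) = 2 * R + 1 := by omega
  rwa [this] at hcard

/-- Some power of an element of infinite order has a long square. -/
theorem FourPoint.exists_pow_wordLength_add_lt (hX : IsSymmGen X) (hE : FourPoint X E) {g : G}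
    (hg : Function.Injective fun n : ℕ => g ^ n) (C : ℕ) :
    ∃ n, 0 < n ∧ wordLength X (g ^ n) + C < wordLength X ((g ^ n) ^ 2) := by
  by_contra! hcon
  obtain ⟨B, hB⟩ := hE.exists_le_mul_of_injective_pow hX hg
  have hpow : ∀ j, wordLength X (g ^ 2 ^ j) ≤ wordLength X g + j * C := by
    intro j
    induction j with
    | zero => simp
    | succ j ih =>
      have := hcon (2 ^ j) (by positivity)
      rw [← pow_mul, ← pow_succ] at this
      rw [Nat.succ_mul]
      omega
  have hall : ∀ k i, i < 2 ^ k → wordLength X (g ^ i) ≤ k * (wordLength X g + k * C) := by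
    intro k
    induction k with
    | zero =>
      intro i hi
      obtain rfl : i = 0 := by simpa using hi
      simp [wordLength_one]
    | succ k ih =>
      intro i hi
      rcases lt_or_ge i (2 ^ k) with h | h
      · have := ih i h
        nlinarith
      · obtain ⟨i', rfl⟩ := Nat.exists_eq_add_of_le h
        have h₁ := ih i' (by rw [pow_succ] at hi; omega)
        have h₂ := hpow k
        have h₃ := wordLength_mul_le hX (g ^ 2 ^ k) (g ^ i')
        rw [← pow_add] at h₃
        nlinarith
  obtain ⟨k, hk⟩ := exists_forall_mul_sq_lt_two_pow (B * (2 * wordLength X g + 2 * C + 1))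
  have h₁ := hk k le_rfl
  have h₂ := hB (2 ^ k - 1) _ fun i hi => hall k i (by have := Nat.two_pow_pos k; omega)
  rw [Nat.sub_add_cancel Nat.one_le_two_pow] at h₂
  have h₃ : 2 * (k * (wordLength X g + k * C)) + 1 ≤
      (2 * wordLength X g + 2 * C + 1) * (k + 1) ^ 2 := by
    nlinarith [Nat.zero_le (wordLength X g * k), Nat.zero_le (wordLength X g * k ^ 2),
      Nat.zero_le (C * k), Nat.zero_le (k ^ 2)]
  have h₄ := Nat.mul_le_mul_right B h₃
  nlinarith

theorem FourPoint.wordLength_pow_add_lt (hX : IsSymmGen X) (hE : FourPoint X E) {h : G}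
    (hh : wordLength X h + 2 * E < wordLength X (h ^ 2)) (n : ℕ) :
    wordLength X (h ^ n) + E < wordLength X (h ^ (n + 1)) := by
  induction n with
  | zero =>
    have := wordLength_pow_le hX h 2
    simp only [pow_zero, wordLength_one, zero_add, pow_one]
    omega
  | succ n ih =>
    have q := hE 1 (h ^ n) (h ^ (n + 1)) (h ^ (n + 2))
    rw [wordDist_pow_add, wordDist_pow_add, wordDist_one_left, wordDist_one_left,
      wordDist_one_left, show h ^ (n + 2) = h ^ (n + 1 + 1) from rfl, wordDist_pow_add,
      pow_one] at q
    omega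

/-- The powers of an element with long square are coarsely length-additive. -/
theorem FourPoint.wordLength_pow_add_wordLength_pow_le (hX : IsSymmGen X) (hE : FourPoint X E)
    {h : G} (hh : wordLength X h + 2 * E < wordLength X (h ^ 2)) (j i : ℕ) :
    wordLength X (h ^ j) + wordLength X (h ^ i) ≤ wordLength X (h ^ (j + i)) + wordLength X h := by
  cases i with
  | zero => simp [wordLength_one]
  | succ i =>
    have q := hE 1 (h ^ (j + (i + 1))) (h ^ (j + 1)) (h ^ j)
    have e : wordDist X (h ^ (j + (i + 1))) (h ^ (j + 1)) = wordLength X (h ^ i) := by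
      rw [wordDist_comm hX, show j + (i + 1) = j + 1 + i by omega, wordDist_pow_add]
    rw [e, wordDist_comm hX (h ^ (j + (i + 1))), wordDist_pow_add, wordDist_comm hX (h ^ (j + 1)),
      wordDist_pow_add, wordDist_one_left, wordDist_one_left, wordDist_one_left, pow_one] at q
    have h₁ := hE.wordLength_pow_add_lt hX hh j
    have h₂ := hE.wordLength_pow_add_lt hX hh i
    omega

/-- The forward orbits of two elements with long squares and no common powers diverge. -/
theorem FourPoint.exists_wordLength_pow_add_le (hX : IsSymmGen X) (hE : FourPoint X E) {g h : G}
    (hg : wordLength X g + 2 * E < wordLength X (g ^ 2))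
    (hh : wordLength X h + 2 * E < wordLength X (h ^ 2))
    (hgh : ∀ i j : ℤ, g ^ i = h ^ j → i = 0) :
    ∃ M : ℕ, ∀ m n : ℕ,
      wordLength X (g ^ m) + wordLength X (h ^ n) ≤ wordDist X (g ^ m) (h ^ n) + M := by
  set D := wordLength X g + 2 * wordLength X h + 2 * E with hD
  set B := (finite_wordLength_le hX D).toFinset with hB
  refine ⟨2 * (B.card * wordLength X g), fun m n => ?_⟩
  by_contra! hlt
  have hbound : ∀ k ≤ B.card, wordLength X (g ^ k) ≤ B.card * wordLength X g := fun k hk =>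
    (wordLength_pow_le hX g k).trans (Nat.mul_le_mul_right _ hk)
  have tri₁ := wordDist_triangle hX 1 (g ^ m) (h ^ n)
  have tri₂ := wordDist_triangle hX 1 (h ^ n) (g ^ m)
  rw [wordDist_one_left, wordDist_one_left] at tri₁ tri₂
  rw [wordDist_comm hX (h ^ n)] at tri₂
  have hBm : B.card ≤ m := by
    have := wordLength_pow_le hX g m
    by_contra! hmB
    have := Nat.mul_le_mul_right (wordLength X g) hmB.le
    omega
  have key : ∀ k ≤ B.card, ∃ k', wordDist X (g ^ k) (h ^ k') ≤ D := by
    intro k hk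
    have hkb := hbound k hk
    have hex : ∃ k', wordLength X (g ^ k) ≤ wordLength X (h ^ k') := ⟨n, by omega⟩
    classical
    obtain ⟨k', hk', hmin⟩ : ∃ k', wordLength X (g ^ k) ≤ wordLength X (h ^ k') ∧
        ∀ l < k', wordLength X (h ^ l) < wordLength X (g ^ k) :=
      ⟨Nat.find hex, Nat.find_spec hex, fun l hl => not_le.1 (Nat.find_min hex hl)⟩
    refine ⟨k', ?_⟩
    have hk'n : k' ≤ n := by
      by_contra! hlt'
      have := hmin n hlt'
      omega
    have hup : wordLength X (h ^ k') ≤ wordLength X (g ^ k) + wordLength X h := by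
      cases k' with
      | zero => simp [wordLength_one]
      | succ l =>
        have h₁ := hmin l (by omega)
        have h₂ := wordLength_mul_le hX (h ^ l) h
        rw [← pow_succ] at h₂
        omega
    have a₁ := hE.wordLength_pow_add_wordLength_pow_le hX hg k (m - k)
    have a₂ := hE.wordLength_pow_add_wordLength_pow_le hX hh k' (n - k')
    have d₁ := wordDist_pow_add (X := X) g k (m - k)
    have d₂ := wordDist_pow_add (X := X) h k' (n - k')
    rw [Nat.add_sub_cancel' (by omega)] at a₁ a₂ d₁ d₂
    have q₁ := hE (g ^ k) (g ^ m) (h ^ n) 1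
    have q₂ := hE (g ^ k) (h ^ n) (h ^ k') 1
    have c := wordDist_comm hX (h ^ n) (h ^ k')
    simp only [wordDist_comm hX _ 1, wordDist_one_left] at q₁ q₂
    omega
  choose! f hf using key
  obtain ⟨k, hk, l, hl, hkl, heq⟩ := Finset.exists_ne_map_eq_of_card_lt_of_maps_to
    (s := Finset.range (B.card + 1)) (t := B) (by simp)
    (f := fun k => (g ^ k)⁻¹ * h ^ f k) (fun k hk => by
      simp only [Finset.coe_range, Set.mem_Iio] at hk
      rw [hB, Set.Finite.coe_toFinset]
      exact hf k (by omega))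
  apply hkl
  have hz : g ^ ((l : ℤ) - k) = h ^ ((f l : ℤ) - f k) := by
    have hinv : (g ^ k)⁻¹ = (g ^ l)⁻¹ * h ^ f l * (h ^ f k)⁻¹ := eq_mul_inv_of_mul_eq heq
    simp only [zpow_sub, zpow_natCast]
    rw [hinv, mul_assoc, mul_inv_cancel_left]
  have := hgh _ _ hz
  omega

end Loxodromic

section VirtuallyCyclic

variable {G : Type u} [Group G] {X : Set G} {E : ℕ}

/-- A virtually cyclic subgroup is contained in a bounded neighbourhood of a cyclic one. -/
theorem IsVirtuallyCyclic.exists_zpow_near {C : Subgroup G} (hC : IsVirtuallyCyclic ↥C)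
    (X : Set G) :
    ∃ g ∈ C, ∃ K : ℕ, ∀ a ∈ C, ∃ m : ℤ, wordDist X (g ^ m) a ≤ K := by
  obtain ⟨Z, hZ, hfi⟩ := hC
  obtain ⟨⟨g, hgZ⟩, hg⟩ := hZ.exists_generator
  obtain ⟨K, hK⟩ := (Set.finite_range fun q : ↥C ⧸ Z =>
    wordLength X ((q.out⁻¹ : ↥C) : G)).bddAbove
  refine ⟨g, g.2, K, fun a ha => ?_⟩
  obtain ⟨z, hz⟩ := QuotientGroup.mk_out_eq_mul Z (⟨a, ha⟩ : ↥C)⁻¹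
  obtain ⟨m, hm⟩ := Subgroup.mem_zpowers_iff.1 (hg z)
  refine ⟨m, ?_⟩
  have h := hK ⟨QuotientGroup.mk (⟨a, ha⟩ : ↥C)⁻¹, rfl⟩
  dsimp only at h
  rw [hz] at h
  simpa [wordDist, ← hm] using h

theorem exists_pow_zpow_near (hX : IsSymmGen X) (g : G) {n : ℕ} (hn : 0 < n) (m : ℤ) :
    ∃ q : ℤ, wordDist X ((g ^ n) ^ q) (g ^ m) ≤ n * wordLength X g := by
  refine ⟨m / n, ?_⟩
  have h₁ : ((g ^ n) ^ (m / n))⁻¹ * g ^ m = g ^ (m % n).toNat := by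
    rw [← zpow_natCast g (m % n).toNat, Int.toNat_of_nonneg (Int.emod_nonneg _ (by omega)),
      ← zpow_natCast g n, ← zpow_mul, ← zpow_neg, ← zpow_add, Int.emod_def]
    congr 1
    ring
  rw [wordDist, h₁]
  have h₂ := Int.emod_lt_of_pos m (show (0 : ℤ) < n by omega)
  exact (wordLength_pow_le hX g _).trans (Nat.mul_le_mul_right _ (by omega))

/-- A virtually cyclic subgroup of a hyperbolic group is either bounded or close to the cyclic
group generated by an element with long square. -/
theorem FourPoint.bounded_or_exists_zpow_near (hX : IsSymmGen X) (hE : FourPoint X E)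
    {C : Subgroup G} (hC : IsVirtuallyCyclic ↥C) :
    (∃ K : ℕ, ∀ a ∈ C, wordLength X a ≤ K) ∨
    ∃ h ∈ C, wordLength X h + 2 * E < wordLength X (h ^ 2) ∧
      ∃ K : ℕ, ∀ a ∈ C, ∃ m : ℤ, wordDist X (h ^ m) a ≤ K := by
  obtain ⟨g, hgC, K, hK⟩ := hC.exists_zpow_near X
  have hpow : ∀ n : ℕ, 0 < n → ∀ a ∈ C, ∃ q : ℤ,
      wordDist X ((g ^ n) ^ q) a ≤ n * wordLength X g + K := by
    intro n hn a ha
    obtain ⟨m, hm⟩ := hK a ha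
    obtain ⟨q, hq⟩ := exists_pow_zpow_near hX g hn m
    exact ⟨q, (wordDist_triangle hX _ _ _).trans (add_le_add hq hm)⟩
  by_cases hg : IsOfFinOrder g
  · left
    refine ⟨orderOf g * wordLength X g + K, fun a ha => ?_⟩
    obtain ⟨q, hq⟩ := hpow _ hg.orderOf_pos a ha
    rwa [pow_orderOf_eq_one, one_zpow, wordDist_one_left] at hq
  · right
    obtain ⟨n, hn, hlong⟩ :=
      hE.exists_pow_wordLength_add_lt hX (injective_pow_iff_not_isOfFinOrder.2 hg) (2 * E)
    exact ⟨g ^ n, C.pow_mem hgC n, hlong, _, hpow n hn⟩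

/-- Two-sided version of `FourPoint.exists_wordLength_pow_add_le`. -/
theorem FourPoint.exists_wordLength_zpow_add_le (hX : IsSymmGen X) (hE : FourPoint X E) {g h : G}
    (hg : wordLength X g + 2 * E < wordLength X (g ^ 2))
    (hh : wordLength X h + 2 * E < wordLength X (h ^ 2))
    (hgh : ∀ i j : ℤ, g ^ i = h ^ j → i = 0) :
    ∃ M : ℕ, ∀ m n : ℤ,
      wordLength X (g ^ m) + wordLength X (h ^ n) ≤ wordDist X (g ^ m) (h ^ n) + M := by
  have hinv : ∀ {k : G}, wordLength X k + 2 * E < wordLength X (k ^ 2) →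
      wordLength X k⁻¹ + 2 * E < wordLength X (k⁻¹ ^ 2) := fun hk => by
    rwa [inv_pow, wordLength_inv hX, wordLength_inv hX]
  obtain ⟨M₁, h₁⟩ := hE.exists_wordLength_pow_add_le hX hg hh hgh
  obtain ⟨M₂, h₂⟩ := hE.exists_wordLength_pow_add_le hX hg (hinv hh) fun i j hij =>
    hgh i (-j) (by rw [hij, inv_zpow'])
  obtain ⟨M₃, h₃⟩ := hE.exists_wordLength_pow_add_le hX (hinv hg) hh fun i j hij => by
    have := hgh (-i) j (by rw [← hij, inv_zpow'])
    omega
  obtain ⟨M₄, h₄⟩ := hE.exists_wordLength_pow_add_le hX (hinv hg) (hinv hh) fun i j hij => by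
    have := hgh (-i) (-j) (by rw [← inv_zpow', ← inv_zpow', hij])
    omega
  refine ⟨M₁ + M₂ + M₃ + M₄, fun m n => ?_⟩
  have hneg : ∀ (k : G) (l : ℕ), k ^ (-(l : ℤ)) = k⁻¹ ^ l := fun k l => by
    rw [← inv_zpow', zpow_natCast]
  obtain ⟨m, rfl | rfl⟩ := m.eq_nat_or_neg <;> obtain ⟨n, rfl | rfl⟩ := n.eq_nat_or_neg <;>
    simp only [hneg, zpow_natCast]
  · have := h₁ m n; omega
  · have := h₂ m n; omega
  · have := h₃ m n; omega
  · have := h₄ m n; omega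

/-- Virtually cyclic subgroups with finite intersection diverge in a hyperbolic group. -/
theorem FourPoint.exists_wordLength_add_le_of_virtuallyCyclic (hX : IsSymmGen X)
    (hE : FourPoint X E) {C₁ C₂ : Subgroup G} (h₁ : IsVirtuallyCyclic ↥C₁)
    (h₂ : IsVirtuallyCyclic ↥C₂) (hfin : ((C₁ ⊓ C₂ : Subgroup G) : Set G).Finite) :
    ∃ M : ℕ, ∀ a ∈ C₁, ∀ b ∈ C₂,
      wordLength X a + wordLength X b ≤ wordDist X a b + M := by
  have tri : ∀ a b : G, wordLength X a ≤ wordDist X a b + wordLength X b ∧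
      wordLength X b ≤ wordDist X a b + wordLength X a := fun a b => by
    have t₁ := wordDist_triangle hX 1 a b
    have t₂ := wordDist_triangle hX 1 b a
    rw [wordDist_comm hX b a] at t₂
    simp only [wordDist_one_left] at t₁ t₂
    omega
  rcases hE.bounded_or_exists_zpow_near hX h₁ with ⟨K, hK⟩ | ⟨g, hgC, hg, K₁, hK₁⟩
  · refine ⟨2 * K, fun a ha b _ => ?_⟩
    have := hK a ha
    have := tri a b
    omega
  rcases hE.bounded_or_exists_zpow_near hX h₂ with ⟨K, hK⟩ | ⟨h, hhC, hh, K₂, hK₂⟩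
  · refine ⟨2 * K, fun a _ b hb => ?_⟩
    have := hK b hb
    have := tri a b
    omega
  have hinj : Function.Injective fun n : ℕ => g ^ n := by
    have hmono : StrictMono fun n : ℕ => wordLength X (g ^ n) :=
      strictMono_nat_of_lt_succ fun n => by
        have := hE.wordLength_pow_add_lt hX hg n
        omega
    exact fun a b hab => hmono.injective (congrArg (wordLength X) hab)
  have hgh : ∀ i j : ℤ, g ^ i = h ^ j → i = 0 := by
    intro i j hij
    by_contra hi
    have hmem : g ^ i ∈ C₁ ⊓ C₂ := ⟨C₁.zpow_mem hgC i, hij ▸ C₂.zpow_mem hhC j⟩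
    have : Finite ↥(C₁ ⊓ C₂) := hfin
    have hfo : IsOfFinOrder (g ^ i) :=
      (C₁ ⊓ C₂).subtype.isOfFinOrder (isOfFinOrder_of_finite (⟨g ^ i, hmem⟩ : ↥(C₁ ⊓ C₂)))
    have hfo' : IsOfFinOrder (g ^ i.natAbs) := by
      rcases Int.natAbs_eq i with h | h
      · rwa [← zpow_natCast, ← h]
      · rwa [h, zpow_neg, isOfFinOrder_inv_iff, zpow_natCast] at hfo
    exact injective_pow_iff_not_isOfFinOrder.1 hinj (hfo'.of_pow (by omega))
  obtain ⟨M, hM⟩ := hE.exists_wordLength_zpow_add_le hX hg hh hgh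
  refine ⟨M + 2 * K₁ + 2 * K₂, fun a ha b hb => ?_⟩
  obtain ⟨m, hm⟩ := hK₁ a ha
  obtain ⟨n, hn⟩ := hK₂ b hb
  have := hM m n
  have := tri (g ^ m) a
  have := tri (h ^ n) b
  have := wordDist_triangle hX (g ^ m) a (h ^ n)
  have := wordDist_triangle hX a b (h ^ n)
  have := wordDist_comm hX b (h ^ n)
  omega

end VirtuallyCyclic

/-- **Lemma 2.2(7).** Concatenation of geodesics representing elements of two virtually
cyclic subgroups with finite intersection is quasigeodesic. -/
theorem two_cyclic_geodesics_quasigeodesic {G : Type u} [Group G]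
    (hG : IsWordHyperbolic G) (X : Set G) (hX : IsSymmGen X)
    (C₁ C₂ : Subgroup G)
    (hvc₁ : IsVirtuallyCyclic ↥C₁) (hvc₂ : IsVirtuallyCyclic ↥C₂)
    (hfin : ((C₁ ⊓ C₂ : Subgroup G) : Set G).Finite) :
    ∃ lam₂ : ℝ, 0 < lam₂ ∧
      ∀ c₁ ∈ C₁, ∀ c₂ ∈ C₂, ∀ V₁ V₂ : List G,
        IsGeodesicWord X V₁ → V₁.prod = c₁ →
        IsGeodesicWord X V₂ → V₂.prod = c₂ →
        IsQuasigeodesicWord X lam₂ (V₁ ++ V₂) := by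
  obtain ⟨Y, hY, E, hE⟩ := hG.exists_fourPoint
  obtain ⟨M, hM⟩ := hE.exists_wordLength_add_le_of_isGeodesicWord hY hX
  obtain ⟨M', hM'⟩ := hE.exists_wordLength_add_le_of_virtuallyCyclic hY hvc₁ hvc₂ hfin
  obtain ⟨A₁, hA₁⟩ := exists_wordLength_le_mul hX hY
  obtain ⟨A₂, hA₂⟩ := exists_wordLength_le_mul hY hX
  refine ⟨((A₁ * A₂ + A₁ * (2 * M + M' + 2 * E) + 1 : ℕ) : ℝ), by positivity, ?_⟩
  rintro c₁ hc₁ c₂ hc₂ V₁ V₂ hV₁ rfl hV₂ rfl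
  refine ⟨hV₁.1.append hV₂.1, fun v hv => ?_⟩
  suffices v.length ≤ A₁ * A₂ * wordLength X v.prod + A₁ * (2 * M + M' + 2 * E) ∨
      v.length = wordLength X v.prod by
    have hnat : v.length ≤ (A₁ * A₂ + A₁ * (2 * M + M' + 2 * E) + 1) * wordLength X v.prod +
        (A₁ * A₂ + A₁ * (2 * M + M' + 2 * E) + 1) := by
      generalize A₁ * (2 * M + M' + 2 * E) = c at this ⊢
      generalize A₁ * A₂ = A at this ⊢
      rcases this with h | h <;>
        nlinarith [Nat.zero_le (c * wordLength X v.prod), Nat.zero_le (A * wordLength X v.prod)]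
    exact_mod_cast hnat
  rcases List.infix_append_iff.1 hv with h | h | ⟨s, p, rfl, ⟨r, rfl⟩, ⟨q, rfl⟩⟩
  · exact Or.inr (hV₁.of_isInfix hX h).2
  · exact Or.inr (hV₂.of_isInfix hX h).2
  left
  have h₁ := hM r s hV₁
  have h₂ := hM p q hV₂
  have h₃ := hM' _ (C₁.inv_mem hc₁) _ hc₂
  have hsp : wordLength Y s.prod + wordLength Y p.prod ≤
      wordLength Y (s.prod * p.prod) + (2 * M + M' + 2 * E) := by
    have d₁ : wordDist Y s.prod⁻¹ ((r ++ s).prod⁻¹) = wordLength Y r.prod := by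
      rw [← wordLength_inv hY r.prod]
      simp [wordDist]
    have d₂ : wordDist Y p.prod (p ++ q).prod = wordLength Y q.prod := by simp [wordDist]
    have d₃ : wordDist Y s.prod⁻¹ p.prod = wordLength Y (s.prod * p.prod) := by simp [wordDist]
    have q₁ := hE (r ++ s).prod⁻¹ s.prod⁻¹ (p ++ q).prod 1
    have q₂ := hE s.prod⁻¹ p.prod (p ++ q).prod 1
    have t₁ := wordDist_triangle hY 1 s.prod⁻¹ p.prod
    have t₂ := wordDist_triangle hY 1 p.prod s.prod⁻¹
    have c := wordDist_comm hY s.prod⁻¹ (r ++ s).prod⁻¹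
    rw [wordDist_comm hY p.prod s.prod⁻¹] at t₂
    simp only [wordDist_comm hY _ 1, wordDist_one_left, wordLength_inv hY] at q₁ q₂ t₁ t₂ h₃
    omega
  have h₄ : s.length = wordLength X s.prod := (hV₁.of_append_right hX).2
  have h₅ : p.length = wordLength X p.prod := (hV₂.of_append_left hX).2
  have h₆ := hA₁ s.prod
  have h₇ := hA₁ p.prod
  have h₈ := Nat.mul_le_mul_left A₁ (hA₂ (s.prod * p.prod))
  have h₉ := Nat.mul_le_mul_left A₁ hsp
  rw [List.length_append, List.prod_append]
  nlinarith
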